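/- arXiv:0901.1104 — 2 statements merged into one kernel-verified Lean document; each statement's English description precedes it below -/
import Mathlib

section
/- For every u ≥ 0 and λ > 0: u²+u < −(1/λ)·ln(λ·∑_{k=1}^∞ 2(k+u)·e^{−λ(k+u)²}) < (u+1)². -/
open Filter Topology in
theorem aux_lower (f h : ℕ → ℝ) (hf : Summable f) (hh : Tendsto h atTop (𝓝 0))
    (H : ∀ k, h k - h (k + 1) < f k) : h 0 < ∑' k, f k := by
  rw [hf.tsum_eq_zero_add]
  have h2 : h 1 ≤ ∑' k, f (k + 1) := by
    have hs : Summable (fun k => f (k + 1)) := (summable_nat_add_iff 1).2 hf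
    have t1 := hs.hasSum.tendsto_sum_nat
    have t2 : Tendsto (fun n => h 1 - h (n + 1)) atTop (𝓝 (h 1 - 0)) :=
      tendsto_const_nhds.sub ((tendsto_add_atTop_iff_nat 1).2 hh)
    rw [sub_zero] at t2
    refine le_of_tendsto_of_tendsto' t2 t1 (fun n => ?_)
    induction n with
    | zero => simp
    | succ n ih =>
      rw [Finset.sum_range_succ]
      have := H (n + 1)
      linarith
  have := H 0
  simp only [zero_add] at this
  linarith

theorem aux_upper (f h : ℕ → ℝ) (hf : ∀ k, 0 ≤ f k) (hh : ∀ k, 0 ≤ h k)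
    (H : ∀ k, f k < h k - h (k + 1)) : Summable f ∧ ∑' k, f k < h 0 := by
  have key : ∀ m n, ∑ k ∈ Finset.range n, f (k + m) ≤ h m := by
    intro m n
    have : ∑ k ∈ Finset.range n, f (k + m) ≤ h m - h (n + m) := by
      induction n with
      | zero => simp
      | succ n ih =>
        rw [Finset.sum_range_succ]
        have := H (n + m)
        rw [show n + 1 + m = n + m + 1 by ring]
        linarith
    have := hh (n + m)
    linarith
  have hs : Summable f := summable_of_sum_range_le hf (fun n => key 0 n)
  refine ⟨hs, ?_⟩
  rw [hs.tsum_eq_zero_add]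
  have := Real.tsum_le_of_sum_range_le (fun k => hf (k + 1)) (key 1)
  have := H 0
  simp only [zero_add] at this
  linarith

theorem aux_cosh (t : ℝ) (ht : 0 ≤ t) : (1 - t) * Real.exp t ≤ (1 + t) * Real.exp (-t) := by
  have hm : MonotoneOn (fun t : ℝ => (1 + t) * Real.exp (-t) - (1 - t) * Real.exp t)
      (Set.Ici 0) := by
    have hd : ∀ x : ℝ, HasDerivAt (fun t : ℝ => (1 + t) * Real.exp (-t) - (1 - t) * Real.exp t)
        (x * (Real.exp x - Real.exp (-x))) x := by
      intro x
      have e1 : HasDerivAt (fun t : ℝ => 1 + t) 1 x := (hasDerivAt_id' x).const_add 1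
      have e2 : HasDerivAt (fun t : ℝ => 1 - t) (-1) x := (hasDerivAt_id' x).const_sub 1
      have e3 : HasDerivAt (fun t : ℝ => Real.exp (-t)) (Real.exp (-x) * -1) x :=
        (hasDerivAt_id' x).fun_neg.exp
      have h1 := (e1.fun_mul e3).fun_sub (e2.fun_mul (Real.hasDerivAt_exp x))
      exact h1.congr_deriv (by ring)
    refine monotoneOn_of_deriv_nonneg (convex_Ici 0) (by fun_prop) (by fun_prop) ?_
    intro x hx
    rw [interior_Ici] at hx
    have hx : 0 < x := hx
    rw [(hd x).deriv]
    have : Real.exp (-x) ≤ Real.exp x := Real.exp_le_exp.2 (by linarith)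
    exact mul_nonneg hx.le (by linarith)
  have := hm (Set.mem_Ici.2 le_rfl) (Set.mem_Ici.2 ht) ht
  simp at this
  linarith

theorem aux_key (p q : ℝ) (hp : 0 < p) (hpq : p < q) :
    1 - q < (1 + p) * Real.exp (-(p + q)) := by
  rcases le_or_gt 1 q with h | h
  · have : 0 < (1 + p) * Real.exp (-(p + q)) := by positivity
    linarith
  · have h1 := aux_cosh p hp.le
    have h2 : 1 - (q - p) ≤ Real.exp (-(q - p)) := by
      have := Real.add_one_le_exp (-(q - p)); linarith
    have h3 : (1 - p) * (1 - (q - p)) ≤ (1 - p) * Real.exp (-(q - p)) :=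
      mul_le_mul_of_nonneg_left h2 (by linarith)
    have h4 : 0 < p * (q - p) := mul_pos hp (by linarith)
    have h5 := mul_le_mul_of_nonneg_right h1 (Real.exp_pos (-q)).le
    rw [mul_assoc, mul_assoc, ← Real.exp_add, ← Real.exp_add] at h5
    rw [show p + -q = -(q - p) by ring, show -p + -q = -(p + q) by ring] at h5
    nlinarith

open Filter Topology in
theorem exp_series_log_bounds (u l : ℝ) (hu : 0 ≤ u) (hl : 0 < l) :
    u ^ 2 + u
      < -(1 / l) * Real.log
          (l * ∑' k : ℕ, 2 * ((k : ℝ) + 1 + u) * Real.exp (-l * ((k : ℝ) + 1 + u) ^ 2)) ∧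
    -(1 / l) * Real.log
        (l * ∑' k : ℕ, 2 * ((k : ℝ) + 1 + u) * Real.exp (-l * ((k : ℝ) + 1 + u) ^ 2))
      < (u + 1) ^ 2 := by
  rw [← tsum_mul_left]
  set f : ℕ → ℝ := fun k =>
    l * (2 * ((k : ℝ) + 1 + u) * Real.exp (-l * ((k : ℝ) + 1 + u) ^ 2)) with hf
  have hU := aux_upper f (fun k => Real.exp (-l * (((k : ℝ) + u) * (k + 1 + u))))
    (fun k => by positivity) (fun k => by positivity) (by
      intro k
      have hx : 0 < (k : ℝ) + 1 + u := by positivity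
      simp only [hf]
      push_cast
      generalize hxx : (k : ℝ) + 1 + u = x at hx
      rw [show (k : ℝ) + u = x - 1 by linarith, show (k : ℝ) + 1 + 1 + u = x + 1 by linarith,
        show -l * ((x - 1) * x) = -l * x ^ 2 + l * x by ring,
        show -l * (x * (x + 1)) = -l * x ^ 2 + -(l * x) by ring, Real.exp_add, Real.exp_add]
      have h1 : l * x < Real.sinh (l * x) := Real.self_lt_sinh_iff.2 (by positivity)
      rw [Real.sinh_eq] at h1
      have := mul_lt_mul_of_pos_left h1 (Real.exp_pos (-l * x ^ 2))
      linarith)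
  have hL := aux_lower f
    (fun k => Real.exp (-l * ((k : ℝ) + 1 + u) ^ 2) * (1 + l * (k + u))) hU.1 (by
      have h0 := (hU.1.tendsto_atTop_zero).const_mul ((1 + l) / (2 * l))
      rw [mul_zero] at h0
      refine squeeze_zero (fun k => by positivity) (fun k => ?_) h0
      simp only [hf]
      have : (1 + l) / (2 * l) * (l * (2 * ((k : ℝ) + 1 + u) *
          Real.exp (-l * ((k : ℝ) + 1 + u) ^ 2))) =
          Real.exp (-l * ((k : ℝ) + 1 + u) ^ 2) * ((1 + l) * (k + 1 + u)) := by
        field_simp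
      rw [this]
      refine mul_le_mul_of_nonneg_left ?_ (Real.exp_pos _).le
      have : (0 : ℝ) ≤ k := by positivity
      nlinarith) (by
      intro k
      have hx : 0 < (k : ℝ) + 1 + u := by positivity
      simp only [hf]
      push_cast
      generalize hxx : (k : ℝ) + 1 + u = x at hx
      rw [show (k : ℝ) + u = x - 1 by linarith, show (k : ℝ) + 1 + 1 + u = x + 1 by linarith,
        show -l * (x + 1) ^ 2 = -l * x ^ 2 + -(l * x + l * (x + 1)) by ring, Real.exp_add]
      have h1 := aux_key (l * x) (l * (x + 1)) (by positivity) (by linarith)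
      have := mul_lt_mul_of_pos_left h1 (Real.exp_pos (-l * x ^ 2))
      linarith)
  have hU2 := hU.2
  simp only [Nat.cast_zero, zero_add] at hU2 hL
  generalize (∑' k, f k) = S at hU2 hL
  have hL' : Real.exp (-l * (u + 1) ^ 2) < S := by
    refine lt_of_le_of_lt ?_ hL
    rw [add_comm 1 u]
    have : 0 ≤ l * u := by positivity
    nlinarith [Real.exp_pos (-l * (u + 1) ^ 2)]
  have hS : 0 < S := (Real.exp_pos _).trans hL'
  have a := (Real.lt_log_iff_exp_lt hS).2 hL'
  have b := (Real.log_lt_iff_lt_exp hS).2 hU2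
  rw [show -(1 / l) * Real.log S = (-Real.log S) / l by ring, lt_div_iff₀ hl, div_lt_iff₀ hl]
  constructor <;> nlinarith
end

section
/- For a ∈ ℝ, p > 0, μ > 0: 1/(μ(p²+a²)^μ) = (√π / (2^{μ−1/2} Γ(μ+1))) · ∫_0^∞ e^{−px} x^{2μ−1} j_{μ−1/2}(ax) dx, where j_λ(x) = J_λ(x)/x^λ with J_λ the Bessel function of the first kind. -/
/-- The normalized Bessel function `j_λ(x) = J_λ(x)/x^λ`, defined by its power series. -/
noncomputable def jBessel (l x : ℝ) : ℝ :=
  (2 : ℝ) ^ (-l) * ∑' k : ℕ, (-(x ^ 2) / 4) ^ k / ((k.factorial : ℝ) * Real.Gamma ((k : ℝ) + l + 1))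

open MeasureTheory Set Filter Topology

lemma binom_aux (m : ℝ) (hm : 0 < m) (k : ℕ) :
    Ring.choose (m + k - 1) k = Real.Gamma (m + k) / (Real.Gamma m * k.factorial) := by
  have h1 : (k.factorial : ℝ) * Ring.choose (m + k - 1) k = Real.Gamma (m + k) / Real.Gamma m := by
    rw [Ring.choose, ← nsmul_eq_mul, Ring.factorial_nsmul_multichoose_eq_ascPochhammer]
    rw [show m + (k:ℝ) - 1 - k + 1 = m by ring, Polynomial.ascPochhammer_smeval_eq_eval]
    have hG := (Real.Gamma_pos_of_pos hm).ne'
    induction k with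
    | zero => simp [hG]
    | succ k ih =>
      rw [ascPochhammer_succ_right]
      simp only [Polynomial.eval_mul, ih]
      push_cast
      rw [← add_assoc, Real.Gamma_add_one (by positivity)]
      simp
      ring
  have := Nat.cast_ne_zero (R := ℝ).mpr k.factorial_ne_zero
  have hG := (Real.Gamma_pos_of_pos hm).ne'
  field_simp at h1 ⊢
  linarith

lemma binom_sum (m : ℝ) (hm : 0 < m) (z : ℝ) (hz : |z| < 1) :
    HasSum (fun k : ℕ => z ^ k * (Real.Gamma (m + k) / k.factorial))
      (Real.Gamma m * (1 / (1 - z) ^ m)) := by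
  have h := (Real.one_div_one_sub_rpow_hasFPowerSeriesOnBall_zero m).hasSum (y := z) (by
    simpa [enorm_eq_nnnorm, ← NNReal.coe_lt_coe] using hz)
  have h2 := h.mul_left (Real.Gamma m)
  have hG := (Real.Gamma_pos_of_pos hm).ne'
  rw [zero_add] at h2
  have e : (fun k : ℕ => z ^ k * (Real.Gamma (m + k) / k.factorial)) = fun i : ℕ => Real.Gamma m *
      (FormalMultilinearSeries.ofScalars ℝ (fun n : ℕ => Ring.choose (m + (n:ℝ) - 1) n) i)
        fun _ => z := by
    ext k
    simp only [FormalMultilinearSeries.apply_eq_prod_smul_coeff,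
      FormalMultilinearSeries.coeff_ofScalars, binom_aux m hm, Finset.prod_const,
      Finset.card_univ, Fintype.card_fin, smul_eq_mul]
    field_simp
  rw [e]
  exact h2

lemma gamma_half (k : ℕ) :
    Real.Gamma ((k:ℝ) + 1 / 2) = (2 * k).factorial * Real.sqrt Real.pi / (4 ^ k * k.factorial) := by
  have h := Real.Gamma_mul_Gamma_add_half ((k:ℝ) + 1 / 2)
  rw [show (k:ℝ) + 1/2 + 1/2 = k + 1 by ring, Real.Gamma_nat_eq_factorial,
    show 2 * ((k:ℝ) + 1/2) = ((2 * k : ℕ):ℝ) + 1 by push_cast; ring, Real.Gamma_nat_eq_factorial,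
    show 1 - (((2 * k : ℕ):ℝ) + 1) = -((2 * k : ℕ):ℝ) by ring, Real.rpow_neg (by norm_num),
    Real.rpow_natCast, pow_mul] at h
  have := Nat.cast_ne_zero (R := ℝ).mpr k.factorial_ne_zero
  rw [eq_div_iff (by positivity)]
  rw [show (2:ℝ) ^ 2 = 4 by norm_num] at h
  calc _ = (Real.Gamma ((k:ℝ) + 1 / 2) * k.factorial) * 4 ^ k := by ring
    _ = _ := by rw [h]; field_simp

lemma beta_int (s t : ℝ) (hs : 0 < s) (ht : 0 < t) :
    IntegrableOn (fun u : ℝ => u ^ (s - 1) * (1 - u) ^ (t - 1)) (Ioc 0 1) ∧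
    ∫ u in Ioc (0:ℝ) 1, u ^ (s - 1) * (1 - u) ^ (t - 1)
      = Real.Gamma s * Real.Gamma t / Real.Gamma (s + t) := by
  have h := Complex.betaIntegral_convergent (u := s) (v := t) (by simpa) (by simpa)
  rw [intervalIntegrable_iff_integrableOn_Ioc_of_le zero_le_one] at h
  have e : ∀ u ∈ Ioc (0:ℝ) 1, (u : ℂ) ^ ((s:ℂ) - 1) * (1 - (u:ℂ)) ^ ((t:ℂ) - 1)
      = ((u ^ (s - 1) * (1 - u) ^ (t - 1) : ℝ) : ℂ) := by
    intro u hu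
    push_cast
    rw [Complex.ofReal_cpow hu.1.le, Complex.ofReal_cpow (by linarith [hu.2])]
    push_cast
    rfl
  have h' := h.congr_fun e measurableSet_Ioc
  refine ⟨by simpa using! h'.re, ?_⟩
  have hb := ProbabilityTheory.beta_eq_betaIntegralReal s t hs ht
  rw [Complex.betaIntegral, intervalIntegral.integral_of_le zero_le_one,
    setIntegral_congr_fun measurableSet_Ioc e, integral_complex_ofReal, Complex.ofReal_re] at hb
  rw [← hb, ProbabilityTheory.beta]

lemma bessel_bdd (m : ℝ) (hm : 0 < m) :
    ∃ M : ℝ, ∀ x, |jBessel (m - 1 / 2) x| ≤ M := by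
  have hG := Real.Gamma_pos_of_pos hm
  have hpi := Real.sqrt_pos.mpr Real.pi_pos
  obtain ⟨hi0, -⟩ := beta_int (1/2) m (by norm_num) hm
  set B := ∫ u in Ioc (0:ℝ) 1, u ^ ((1/2:ℝ) - 1) * (1 - u) ^ (m - 1) with hB
  refine ⟨(2:ℝ) ^ (-(m - 1/2)) * (1 / (Real.sqrt Real.pi * Real.Gamma m) * B), fun x => ?_⟩
  set F : ℕ → ℝ → ℝ := fun k u =>
    ((-1) ^ k * x ^ (2 * k) / (2 * k).factorial) * (u ^ (((k:ℝ) + 1/2) - 1) * (1 - u) ^ (m - 1))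
    with hF
  have hFint : ∀ k, IntegrableOn (F k) (Ioc 0 1) := fun k =>
    (beta_int ((k:ℝ) + 1/2) m (by positivity) hm).1.const_mul _
  have hFv : ∀ k : ℕ, (-(x ^ 2) / 4) ^ k / ((k.factorial : ℝ) * Real.Gamma ((k : ℝ) + (m - 1/2) + 1))
      = 1 / (Real.sqrt Real.pi * Real.Gamma m) * ∫ u in Ioc (0:ℝ) 1, F k u := by
    intro k
    rw [hF, integral_const_mul, (beta_int ((k:ℝ) + 1/2) m (by positivity) hm).2, gamma_half,
      show (k:ℝ) + (m - 1/2) + 1 = k + 1/2 + m by ring]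
    have := Nat.cast_ne_zero (R := ℝ).mpr k.factorial_ne_zero
    have := Nat.cast_ne_zero (R := ℝ).mpr (2 * k).factorial_ne_zero
    have := (Real.Gamma_pos_of_pos (show 0 < (k:ℝ) + 1/2 + m by positivity)).ne'
    rw [div_pow, neg_pow, ← pow_mul]
    field_simp
  have hFeq : ∀ k, ∀ u ∈ Ioc (0:ℝ) 1, F k u
      = ((-1) ^ k * (x * Real.sqrt u) ^ (2 * k) / (2 * k).factorial)
        * (u ^ ((1/2:ℝ) - 1) * (1 - u) ^ (m - 1)) := by
    intro k u hu
    simp only [hF]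
    rw [show (k:ℝ) + 1/2 - 1 = k + (1/2 - 1) by ring, Real.rpow_add hu.1, Real.rpow_natCast,
      mul_pow, pow_mul (Real.sqrt u), Real.sq_sqrt hu.1.le]
    ring
  have hnn : ∀ u ∈ Ioc (0:ℝ) 1, 0 ≤ u ^ ((1/2:ℝ) - 1) * (1 - u) ^ (m - 1) := fun u hu =>
    mul_nonneg (Real.rpow_nonneg hu.1.le _) (Real.rpow_nonneg (by linarith [hu.2]) _)
  have hsum : Summable fun k => ∫ u in Ioc (0:ℝ) 1, ‖F k u‖ := by
    have hs : Summable fun k : ℕ => |x| ^ (2 * k) / ((2 * k).factorial : ℝ) * B :=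
      ((Real.summable_pow_div_factorial |x|).comp_injective
        (i := fun k : ℕ => 2 * k) (fun a b h => by simpa using h)).mul_right B
    refine hs.of_nonneg_of_le (fun k => integral_nonneg fun _ => norm_nonneg _) fun k => ?_
    rw [hB, ← integral_const_mul]
    refine setIntegral_mono_on (hFint k).norm (hi0.const_mul _) measurableSet_Ioc fun u hu => ?_
    rw [hFeq k u hu, norm_mul, Real.norm_of_nonneg (hnn u hu)]
    refine mul_le_mul_of_nonneg_right ?_ (hnn u hu)
    simp only [norm_div, norm_mul, norm_pow, norm_neg, norm_one, one_pow, one_mul,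
      Real.norm_eq_abs, Nat.abs_cast]
    gcongr
    rw [abs_of_nonneg (Real.sqrt_nonneg u)]
    exact mul_le_of_le_one_right (abs_nonneg x) (Real.sqrt_le_one.mpr hu.2)
  have h := hasSum_integral_of_summable_integral_norm hFint hsum
  have hcos : ∀ u ∈ Ioc (0:ℝ) 1, ∑' k, F k u
      = Real.cos (x * Real.sqrt u) * (u ^ ((1/2:ℝ) - 1) * (1 - u) ^ (m - 1)) := by
    intro u hu
    rw [tsum_congr fun k => hFeq k u hu, tsum_mul_right, (Real.hasSum_cos _).tsum_eq]
  unfold jBessel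
  rw [tsum_congr hFv, tsum_mul_left, h.tsum_eq, abs_mul, abs_mul,
    abs_of_pos (show 0 < (2:ℝ) ^ (-(m - 1/2)) by positivity),
    abs_of_pos (show 0 < 1 / (Real.sqrt Real.pi * Real.Gamma m) by positivity)]
  gcongr
  rw [← Real.norm_eq_abs]
  refine norm_integral_le_of_norm_le hi0 ?_
  refine (ae_restrict_iff' measurableSet_Ioc).mpr (ae_of_all _ fun u hu => ?_)
  rw [hcos u hu, norm_mul, Real.norm_of_nonneg (hnn u hu)]
  exact mul_le_of_le_one_left (hnn u hu) (Real.abs_cos_le_one _)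

lemma gamma_lap (s p : ℝ) (hs : 0 < s) (hp : 0 < p) :
    IntegrableOn (fun x : ℝ => x ^ (s - 1) * Real.exp (-p * x)) (Ioi 0) ∧
    ∫ x in Ioi (0:ℝ), x ^ (s - 1) * Real.exp (-p * x) = Real.Gamma s / p ^ s := by
  constructor
  · have := integrableOn_rpow_mul_exp_neg_mul_rpow (s := s - 1) (p := 1) (b := p) (by linarith)
      one_pos hp
    simpa using this
  · have := Real.integral_rpow_mul_exp_neg_mul_Ioi hs hp
    simp only [← neg_mul] at this
    rw [this, one_div, Real.inv_rpow hp.le]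
    ring

lemma bessel_meas (l a : ℝ) : Measurable fun x => jBessel l (a * x) := by
  unfold jBessel
  exact (Measurable.tsum fun k => by fun_prop).const_mul _

lemma lap_analytic (a m : ℝ) (hm : 0 < m) :
    AnalyticOnNhd ℝ (fun p : ℝ => ∫ x in Ioi (0 : ℝ),
      Real.exp (-p * x) * x ^ (2 * m - 1) * jBessel (m - 1 / 2) (a * x)) (Ioi 0) := by
  obtain ⟨M, hM⟩ := bessel_bdd m hm
  set D : ℝ → ℝ := fun x => x ^ (2 * m - 1) * (M + jBessel (m - 1/2) (a * x)) with hD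
  have hDm : Measurable D := by
    have := bessel_meas (m - 1/2) a
    fun_prop
  have hDnn : ∀ x ∈ Ioi (0:ℝ), 0 ≤ D x := fun x hx =>
    mul_nonneg (Real.rpow_nonneg (le_of_lt hx) _) (by linarith [neg_abs_le (jBessel (m - 1/2) (a * x)), hM (a * x)])
  set ν := (volume.restrict (Ioi (0:ℝ))).withDensity (fun x => ((D x).toNNReal : ENNReal)) with hν
  have hi1 : ∀ p : ℝ, 0 < p → IntegrableOn
      (fun x => M * (x ^ (2 * m - 1) * Real.exp (-p * x))) (Ioi 0) := fun p hp =>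
    (gamma_lap (2 * m) p (by positivity) hp).1.const_mul M
  have hi2 : ∀ p : ℝ, 0 < p → IntegrableOn
      (fun x => Real.exp (-p * x) * x ^ (2 * m - 1) * jBessel (m - 1 / 2) (a * x)) (Ioi 0) := by
    intro p hp
    refine (hi1 p hp).mono' ?_ ?_
    · have := bessel_meas (m - 1/2) a
      exact Measurable.aestronglyMeasurable (by fun_prop)
    · refine (ae_restrict_iff' measurableSet_Ioi).mpr (ae_of_all _ fun x hx => ?_)
      have h0 : 0 ≤ x ^ (2 * m - 1) := Real.rpow_nonneg (le_of_lt hx) _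
      rw [norm_mul, norm_mul, Real.norm_of_nonneg h0, Real.norm_of_nonneg (Real.exp_pos _).le,
        Real.norm_eq_abs]
      calc _ ≤ Real.exp (-p * x) * x ^ (2 * m - 1) * M := by gcongr; exact hM _
        _ = _ := by ring
  have hDe : ∀ p : ℝ, ∀ x ∈ Ioi (0:ℝ), ((D x).toNNReal : ℝ) • Real.exp (-p * x)
      = M * (x ^ (2 * m - 1) * Real.exp (-p * x))
        + Real.exp (-p * x) * x ^ (2 * m - 1) * jBessel (m - 1 / 2) (a * x) := by
    intro p x hx
    rw [Real.coe_toNNReal _ (hDnn x hx), smul_eq_mul, hD]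
    ring
  have hset : Iio (0:ℝ) ⊆ interior (ProbabilityTheory.integrableExpSet id ν) := by
    refine interior_maximal ?_ isOpen_Iio
    intro t ht
    change Integrable (fun x => Real.exp (t * id x)) ν
    rw [hν, integrable_withDensity_iff_integrable_coe_smul hDm.real_toNNReal]
    have ht' : 0 < -t := neg_pos.mpr ht
    have := ((hi1 (-t) ht').add (hi2 (-t) ht')).congr_fun (fun x hx => (hDe (-t) x hx).symm)
      measurableSet_Ioi
    simpa using! this
  have hA : AnalyticOnNhd ℝ (fun p : ℝ => ProbabilityTheory.mgf id ν (-p)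
      - M * (Real.Gamma (2 * m) / Real.exp (Real.log p * (2 * m)))) (Ioi 0) := by
    intro p hp
    have hp' : (0:ℝ) < p := hp
    have h1 : AnalyticAt ℝ (ProbabilityTheory.mgf id ν) (-p) :=
      ProbabilityTheory.analyticOnNhd_mgf _ (hset (by simpa using hp'))
    have h2 : AnalyticAt ℝ (fun p : ℝ => ProbabilityTheory.mgf id ν (-p)) p :=
      AnalyticAt.comp (g := ProbabilityTheory.mgf id ν) (f := fun p : ℝ => -p) h1 analyticAt_id.neg
    have h3 : AnalyticAt ℝ (fun p : ℝ => Real.exp (Real.log p * (2 * m))) p :=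
      ((analyticAt_id.log hp').mul analyticAt_const).rexp
    exact h2.sub (analyticAt_const.mul (analyticAt_const.div h3 (Real.exp_pos _).ne'))
  refine hA.congr isOpen_Ioi fun p hp => ?_
  have hp' : (0:ℝ) < p := hp
  have : ProbabilityTheory.mgf id ν (-p) = M * (Real.Gamma (2 * m) / p ^ (2 * m)) +
      ∫ x in Ioi (0 : ℝ), Real.exp (-p * x) * x ^ (2 * m - 1) * jBessel (m - 1 / 2) (a * x) := by
    rw [ProbabilityTheory.mgf, hν, integral_withDensity_eq_integral_smul hDm.real_toNNReal,
      ← (gamma_lap (2 * m) p (by positivity) hp').2, ← integral_const_mul,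
      ← integral_add (hi1 p hp') (hi2 p hp')]
    exact setIntegral_congr_fun measurableSet_Ioi fun x hx => hDe p x hx
  simp only [this, ← Real.rpow_def_of_pos hp']
  ring

lemma gamma_dup (m : ℝ) (k : ℕ) :
    Real.Gamma (2 * m + 2 * k) =
      2 ^ (2 * m - 1) * 4 ^ k * (Real.Gamma (m + k) * Real.Gamma (m + k + 1 / 2))
        / Real.sqrt Real.pi := by
  have hpi := (Real.sqrt_pos.mpr Real.pi_pos).ne'
  rw [Real.Gamma_mul_Gamma_add_half, show 2 * (m + (k:ℝ)) = 2 * m + 2 * k by ring,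
    show (1 - (2 * m + 2 * (k:ℝ))) = -((2 * m - 1) + ((2 * k : ℕ):ℝ)) by push_cast; ring,
    Real.rpow_neg (by norm_num), Real.rpow_add (by norm_num), Real.rpow_natCast, pow_mul]
  norm_num
  have : (2:ℝ) ^ (2 * m - 1) ≠ 0 := by positivity
  field_simp

lemma lap_large (a p m : ℝ) (hp : 0 < p) (hm : 0 < m) (hap : |a| < p) :
    1 / (m * (p ^ 2 + a ^ 2) ^ m)
      = Real.sqrt Real.pi / ((2 : ℝ) ^ (m - 1 / 2) * Real.Gamma (m + 1))
          * ∫ x in Ioi (0 : ℝ), Real.exp (-p * x) * x ^ (2 * m - 1) * jBessel (m - 1 / 2) (a * x) := by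
  have hpi := Real.sqrt_pos.mpr Real.pi_pos
  have hGm := Real.Gamma_pos_of_pos hm
  have h2 : 0 < (2:ℝ) ^ (m - 1/2) := by positivity
  set c : ℕ → ℝ := fun k => ((2:ℝ) ^ (m - 1/2))⁻¹ * ((1 / 4) ^ k /
    (k.factorial * Real.Gamma (m + k + 1/2))) with hc
  have hcn : ∀ k, 0 ≤ c k := fun k => by
    have := Real.Gamma_pos_of_pos (show 0 < m + k + 1/2 by positivity)
    simp only [hc]
    positivity
  set G : ℕ → ℝ → ℝ := fun k x => (-(a ^ 2)) ^ k * c k * (x ^ ((2 * m + 2 * k) - 1) * Real.exp (-p * x))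
    with hG
  set K := (2:ℝ) ^ (m - 1/2) / Real.sqrt Real.pi / p ^ (2 * m) with hK
  have hval : ∀ (z : ℝ) (k : ℕ), z ^ k * c k * (Real.Gamma (2 * m + 2 * k) / p ^ (2 * m + 2 * k))
      = K * ((z / p ^ 2) ^ k * (Real.Gamma (m + k) / k.factorial)) := by
    intro z k
    have h1 := (Real.Gamma_pos_of_pos (show 0 < m + k + 1/2 by positivity)).ne'
    have := Nat.cast_ne_zero (R := ℝ).mpr k.factorial_ne_zero
    have h4 : (2:ℝ) ^ (2 * m - 1) = 2 ^ (m - 1/2) * 2 ^ (m - 1/2) := by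
      rw [← Real.rpow_add (by norm_num)]; ring_nf
    have h5 : p ^ (2 * m + 2 * (k:ℝ)) = p ^ (2 * m) * (p ^ 2) ^ k := by
      rw [Real.rpow_add hp, show 2 * (k:ℝ) = ((2 * k : ℕ):ℝ) by push_cast; ring, Real.rpow_natCast,
        pow_mul]
    have h6 : 0 < p ^ (2 * m) := by positivity
    rw [gamma_dup, hc, hK, h4, h5, div_pow z]
    beta_reduce
    rw [div_pow 1, one_pow]
    generalize Real.Gamma (m + k + 1/2) = A at *
    generalize Real.Gamma (m + k) = A2 at *
    generalize (2:ℝ) ^ (m - 1/2) = A3 at *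
    generalize p ^ (2 * m) = A4 at *
    field_simp
  have hz : ∀ z : ℝ, |z| = a ^ 2 → |z / p ^ 2| < 1 := by
    intro z hz
    rw [abs_div, hz, abs_of_pos (by positivity : 0 < p ^ 2), div_lt_one (by positivity)]
    exact sq_lt_sq' (by linarith [neg_abs_le a]) (lt_of_le_of_lt (le_abs_self a) hap)
  have hGint : ∀ k, IntegrableOn (G k) (Ioi 0) := fun k =>
    (gamma_lap (2 * m + 2 * k) p (by positivity) hp).1.const_mul _
  have hsum : Summable fun k => ∫ x in Ioi (0:ℝ), ‖G k x‖ := by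
    have hs := ((binom_sum m hm (a ^ 2 / p ^ 2) (hz _ (by simp))).summable.mul_left K)
    refine hs.congr fun k => ?_
    rw [← hval, ← (gamma_lap (2 * m + 2 * k) p (by positivity) hp).2, ← integral_const_mul]
    refine setIntegral_congr_fun measurableSet_Ioi fun x hx => ?_
    have h0 : 0 ≤ x ^ (2 * m + 2 * (k:ℝ) - 1) := Real.rpow_nonneg (le_of_lt hx) _
    simp only [hG]
    rw [norm_mul, norm_mul _ (c k), norm_mul (x ^ _), Real.norm_of_nonneg h0,
      Real.norm_of_nonneg (Real.exp_pos _).le, Real.norm_of_nonneg (hcn k), norm_pow, norm_neg,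
      Real.norm_of_nonneg (sq_nonneg a)]
  have h := hasSum_integral_of_summable_integral_norm hGint hsum
  have hGv : ∀ k, ∫ x in Ioi (0:ℝ), G k x
      = K * ((-(a ^ 2) / p ^ 2) ^ k * (Real.Gamma (m + k) / k.factorial)) := by
    intro k
    rw [← hval, ← (gamma_lap (2 * m + 2 * k) p (by positivity) hp).2, ← integral_const_mul]
  simp only [hGv] at h
  have hu := h.unique ((binom_sum m hm (-(a ^ 2) / p ^ 2) (hz _ (by simp))).mul_left K)
  have hint : ∫ x in Ioi (0 : ℝ), Real.exp (-p * x) * x ^ (2 * m - 1) * jBessel (m - 1 / 2) (a * x)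
      = ∫ x in Ioi (0:ℝ), ∑' k, G k x := by
    refine setIntegral_congr_fun measurableSet_Ioi fun x hx => ?_
    simp only [jBessel]
    rw [← mul_assoc, ← tsum_mul_left]
    refine tsum_congr fun k => ?_
    simp only [hG, hc]
    rw [show 2 * m + 2 * (k:ℝ) - 1 = (2 * m - 1) + ((2 * k : ℕ):ℝ) by push_cast; ring,
      Real.rpow_add hx, Real.rpow_natCast, pow_mul, Real.rpow_neg (by norm_num),
      show (k:ℝ) + (m - 1/2) + 1 = m + k + 1/2 by ring,
      show (-(a * x) ^ 2 / 4) = -(a^2) * (1/4) * x^2 by ring, mul_pow, mul_pow]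
    ring
  rw [hint, hu, Real.Gamma_add_one hm.ne', hK]
  have e1 : (p ^ 2 + a ^ 2) ^ m = p ^ (2 * m) * (1 - -(a ^ 2) / p ^ 2) ^ m := by
    rw [Real.rpow_mul hp.le, ← Real.mul_rpow (by positivity)
      (by rw [neg_div, sub_neg_eq_add]; positivity), Real.rpow_two]
    congr 1
    field_simp
    ring
  have h7 : 0 < (1 - -(a ^ 2) / p ^ 2) ^ m := by
    apply Real.rpow_pos_of_pos
    rw [neg_div, sub_neg_eq_add]; positivity
  have h6 : 0 < p ^ (2 * m) := by positivity
  rw [e1]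
  generalize (1 - -(a ^ 2) / p ^ 2) ^ m = A at *
  generalize p ^ (2 * m) = A4 at *
  generalize (2:ℝ) ^ (m - 1/2) = A3 at *
  field_simp

theorem laplace_bessel_identity (a p μ : ℝ) (hp : 0 < p) (hμ : 0 < μ) :
    1 / (μ * (p ^ 2 + a ^ 2) ^ μ)
      = Real.sqrt Real.pi / ((2 : ℝ) ^ (μ - 1 / 2) * Real.Gamma (μ + 1))
          * ∫ x in Set.Ioi (0 : ℝ), Real.exp (-p * x) * x ^ (2 * μ - 1) * jBessel (μ - 1 / 2) (a * x) := by
  have hL : AnalyticOnNhd ℝ (fun p : ℝ => 1 / (μ * (p ^ 2 + a ^ 2) ^ μ)) (Ioi 0) := by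
    have h1 : AnalyticOnNhd ℝ
        (fun p : ℝ => 1 / (μ * Real.exp (Real.log (p ^ 2 + a ^ 2) * μ))) (Ioi 0) := by
      intro q hq
      have hq' : (0:ℝ) < q := hq
      have h2 : AnalyticAt ℝ (fun p : ℝ => p ^ 2 + a ^ 2) q :=
        (analyticAt_id.pow 2).add analyticAt_const
      exact analyticAt_const.div
        (analyticAt_const.mul (((h2.log (by positivity)).mul analyticAt_const).rexp))
        (mul_pos hμ (Real.exp_pos _)).ne'
    refine h1.congr isOpen_Ioi fun q hq => ?_
    have hq' : (0:ℝ) < q := hq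
    simp only [← Real.rpow_def_of_pos (show 0 < q ^ 2 + a ^ 2 by positivity)]
  have hR : AnalyticOnNhd ℝ (fun p : ℝ =>
      Real.sqrt Real.pi / ((2 : ℝ) ^ (μ - 1 / 2) * Real.Gamma (μ + 1))
        * ∫ x in Ioi (0 : ℝ), Real.exp (-p * x) * x ^ (2 * μ - 1) * jBessel (μ - 1 / 2) (a * x))
      (Ioi 0) := fun q hq => analyticAt_const.mul (lap_analytic a μ hμ q hq)
  have hz : |a| + 1 ∈ Ioi (0:ℝ) := by
    have := abs_nonneg a
    simp only [mem_Ioi]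
    linarith
  refine hL.eqOn_of_preconnected_of_eventuallyEq hR isPreconnected_Ioi hz ?_ hp
  filter_upwards [Ioi_mem_nhds (show |a| < |a| + 1 by linarith)] with q hq
  exact lap_large a q μ (lt_of_le_of_lt (abs_nonneg a) hq) hμ hq
end
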